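/- Let H be a quasi-bialgebra and let A be a left H-module equipped with a k-bilinear multiplication. Define a multiplication on the vector space A⊗H by (a⊗h)(a′⊗h′) = (x¹·a)(x²h₁·a′) ⊗ x³h₂h′, where Φ⁻¹ = x¹⊗x²⊗x³. If this multiplication on A⊗H is associative, then the multiplication of A satisfies (ab)c = (X¹·a)((X²·b)(X³·c)) for all a, b, c ∈ A, where Φ = X¹⊗X²⊗X³. -/

import Mathlib

open TensorProduct BigOperators

/-- A quasi-bialgebra in the sense of Drinfeld. -/
structure QuasiBialgebra (k H : Type*) [Field k] [Ring H] [Algebra k H] where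
  comul : H →ₐ[k] H ⊗[k] H
  counit : H →ₐ[k] k
  Phi : H ⊗[k] (H ⊗[k] H)
  PhiInv : H ⊗[k] (H ⊗[k] H)
  Phi_mul_inv : Phi * PhiInv = 1
  inv_mul_Phi : PhiInv * Phi = 1
  comul_coassoc : ∀ h : H,
    (Algebra.TensorProduct.map (AlgHom.id k H) comul) (comul h)
      = Phi * (Algebra.TensorProduct.assoc k k k H H H)
          ((Algebra.TensorProduct.map comul (AlgHom.id k H)) (comul h)) * PhiInv
  counit_comul_right : ∀ h : H,
    (Algebra.TensorProduct.map (AlgHom.id k H) counit) (comul h) = h ⊗ₜ[k] (1 : k)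
  counit_comul_left : ∀ h : H,
    (Algebra.TensorProduct.map counit (AlgHom.id k H)) (comul h) = (1 : k) ⊗ₜ[k] h
  pentagon :
    ((1 : H) ⊗ₜ[k] Phi)
      * (Algebra.TensorProduct.map (AlgHom.id k H)
          (((Algebra.TensorProduct.assoc k k k H H H).toAlgHom).comp
            (Algebra.TensorProduct.map comul (AlgHom.id k H)))) Phi
      * (Algebra.TensorProduct.map (AlgHom.id k H)
          (Algebra.TensorProduct.map (AlgHom.id k H)
            (Algebra.TensorProduct.includeLeft : H →ₐ[k] H ⊗[k] H))) Phi
    = (Algebra.TensorProduct.map (AlgHom.id k H)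
          (Algebra.TensorProduct.map (AlgHom.id k H) comul)) Phi
      * (Algebra.TensorProduct.assoc k k k H H (H ⊗[k] H))
          ((Algebra.TensorProduct.map comul (AlgHom.id k (H ⊗[k] H))) Phi)
  counit_Phi : (Algebra.TensorProduct.map (AlgHom.id k H)
      (Algebra.TensorProduct.map counit (AlgHom.id k H))) Phi = 1

/-- A quasi-Hopf algebra: a quasi-bialgebra with antipode `S` (a bijective algebra
anti-automorphism with inverse `Sinv`) and elements `alpha`, `beta`, normalized so that
`counit alpha = counit beta = 1`.  Identities involving Sweedler components are stated
universally over all finite representations of the relevant tensors. -/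
structure QuasiHopfAlgebra (k H : Type*) [Field k] [Ring H] [Algebra k H] extends
    QuasiBialgebra k H where
  alpha : H
  beta : H
  S : H →ₗ[k] H
  Sinv : H →ₗ[k] H
  S_one : S 1 = 1
  S_mul : ∀ a b : H, S (a * b) = S b * S a
  Sinv_S : ∀ h : H, Sinv (S h) = h
  S_Sinv : ∀ h : H, S (Sinv h) = h
  antipode_left : ∀ h : H, ∀ (n : ℕ) (d1 d2 : Fin n → H),
    comul h = ∑ i, d1 i ⊗ₜ[k] d2 i →
    ∑ i, S (d1 i) * alpha * d2 i = counit h • alpha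
  antipode_right : ∀ h : H, ∀ (n : ℕ) (d1 d2 : Fin n → H),
    comul h = ∑ i, d1 i ⊗ₜ[k] d2 i →
    ∑ i, d1 i * beta * S (d2 i) = counit h • beta
  antipode_Phi : ∀ (n : ℕ) (X1 X2 X3 : Fin n → H),
    Phi = ∑ i, X1 i ⊗ₜ[k] (X2 i ⊗ₜ[k] X3 i) →
    ∑ i, X1 i * beta * S (X2 i) * alpha * X3 i = 1
  antipode_PhiInv : ∀ (n : ℕ) (x1 x2 x3 : Fin n → H),
    PhiInv = ∑ i, x1 i ⊗ₜ[k] (x2 i ⊗ₜ[k] x3 i) →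
    ∑ i, S (x1 i) * alpha * x2 i * beta * S (x3 i) = 1
  counit_alpha : counit alpha = 1
  counit_beta : counit beta = 1

/-!
Let `A ⊗ H` carry the multiplication `u * v` and let `id ⊗ ε : A ⊗ H → A`. Since `(id ⊗ ε) Δ h = h`
and `(id ⊗ id ⊗ ε) Φ⁻¹ = 1 ⊗ 1`, one has `(id ⊗ ε) ((a ⊗ h) * w) = a (h · (id ⊗ ε) w)`; the second
identity is not an axiom, but follows from the pentagon by applying `ε` to its third factor.
Applying `id ⊗ ε` to `((a ⊗ 1) * (b ⊗ 1)) * (c ⊗ 1) = (a ⊗ 1) * ((b ⊗ 1) * (c ⊗ 1))` therefore gives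
`((x¹ · a)(x² · b))(x³ · c) = a (b c)`. This holds for all `a`, `b`, `c`, so it can be evaluated at
`Φ · (a ⊗ b ⊗ c)`, where the left-hand side becomes `(a b) c`.
-/

section OuterTensor

variable {k S T T' M N N' : Type*} [CommSemiring k]
  [Semiring S] [Algebra k S] [Semiring T] [Algebra k T] [Semiring T'] [Algebra k T']
  [AddCommMonoid M] [Module k M] [AddCommMonoid N] [Module k N]
  [AddCommMonoid N'] [Module k N']

/-- The outer tensor product of representations `ρ` of `S` on `M` and `σ` of `T` on `N`, a
representation of `S ⊗ T` on `M ⊗ N`. -/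
noncomputable def outerTensor (ρ : S →ₐ[k] Module.End k M) (σ : T →ₐ[k] Module.End k N) :
    S ⊗[k] T →ₐ[k] Module.End k (M ⊗[k] N) :=
  Module.endTensorEndAlgHom.comp (Algebra.TensorProduct.map ρ σ)

@[simp]
lemma outerTensor_tmul_tmul (ρ : S →ₐ[k] Module.End k M) (σ : T →ₐ[k] Module.End k N)
    (s : S) (t : T) (m : M) (n : N) :
    outerTensor ρ σ (s ⊗ₜ t) (m ⊗ₜ n) = ρ s m ⊗ₜ σ t n :=
  rfl

lemma lTensor_outerTensor {σ : T →ₐ[k] Module.End k N} {σ' : T' →ₐ[k] Module.End k N'}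
    {ψ : T →ₐ[k] T'} {g : N →ₗ[k] N'} (ρ : S →ₐ[k] Module.End k M)
    (hg : ∀ t n, g (σ t n) = σ' (ψ t) (g n)) (z : S ⊗[k] T) (v : M ⊗[k] N) :
    g.lTensor M (outerTensor ρ σ z v)
      = outerTensor ρ σ' (Algebra.TensorProduct.map (AlgHom.id k S) ψ z) (g.lTensor M v) := by
  induction z with
  | zero => simp
  | add y z hy hz => simp only [map_add, LinearMap.add_apply, hy, hz]
  | tmul s t =>
    induction v with
    | zero => simp
    | add v w hv hw => simp only [map_add, hv, hw]
    | tmul m n => simp [hg]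

end OuterTensor

section MulFirst

variable {k A N N' : Type*} [CommSemiring k] [AddCommMonoid A] [Module k A]
  [AddCommMonoid N] [Module k N] [AddCommMonoid N'] [Module k N']

/-- Multiplication of the first two factors, `a ⊗ (b ⊗ n) ↦ ab ⊗ n`, where `mulA` is the
multiplication of the not necessarily associative algebra `A`. -/
noncomputable def mulFirst (mulA : A →ₗ[k] A →ₗ[k] A) (N : Type*) [AddCommMonoid N] [Module k N] :
    A ⊗[k] (A ⊗[k] N) →ₗ[k] A ⊗[k] N :=
  (TensorProduct.lift mulA).rTensor N ∘ₗ (TensorProduct.assoc k A A N).symm.toLinearMap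

@[simp]
lemma mulFirst_tmul (mulA : A →ₗ[k] A →ₗ[k] A) (a b : A) (n : N) :
    mulFirst mulA N (a ⊗ₜ (b ⊗ₜ n)) = mulA a b ⊗ₜ n :=
  rfl

lemma lTensor_mulFirst (mulA : A →ₗ[k] A →ₗ[k] A) (f : N →ₗ[k] N') (v : A ⊗[k] (A ⊗[k] N)) :
    f.lTensor A (mulFirst mulA N v) = mulFirst mulA N' ((f.lTensor A).lTensor A v) := by
  suffices f.lTensor A ∘ₗ mulFirst mulA N = mulFirst mulA N' ∘ₗ (f.lTensor A).lTensor A from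
    LinearMap.congr_fun this v
  ext
  simp

end MulFirst

lemma exists_sum_tmul_tmul_eq {k M N P : Type*} [CommSemiring k] [AddCommMonoid M] [Module k M]
    [AddCommMonoid N] [Module k N] [AddCommMonoid P] [Module k P] (y : M ⊗[k] (N ⊗[k] P)) :
    ∃ (n : ℕ) (f : Fin n → M) (g : Fin n → N) (h : Fin n → P),
      y = ∑ i, f i ⊗ₜ[k] (g i ⊗ₜ[k] h i) := by
  induction y with
  | zero => exact ⟨0, Fin.elim0, Fin.elim0, Fin.elim0, by simp⟩
  | tmul a b =>
    obtain ⟨n, g, h, rfl⟩ := b.exists_sum_tmul_eq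
    exact ⟨n, fun _ => a, g, h, TensorProduct.tmul_sum _ _ _⟩
  | add y z hy hz =>
    obtain ⟨n, f, g, h, rfl⟩ := hy
    obtain ⟨m, f', g', h', rfl⟩ := hz
    exact ⟨n + m, Fin.append f f', Fin.append g g', Fin.append h h',
      by simp [Fin.sum_univ_add]⟩

namespace QuasiBialgebra

section Counit

variable {k H : Type*} [Field k] [Ring H] [Algebra k H] (Q : QuasiBialgebra k H)

/-- The counit applied to the left factor, `g ⊗ h ↦ ε(g) h`. -/
noncomputable def counitLeft : H ⊗[k] H →ₐ[k] H :=
  (Algebra.TensorProduct.lid k H).toAlgHom.comp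
    (Algebra.TensorProduct.map Q.counit (AlgHom.id k H))

/-- The counit applied to the right factor, `g ⊗ h ↦ ε(h) g`. -/
noncomputable def counitRight : H ⊗[k] H →ₐ[k] H :=
  (Algebra.TensorProduct.rid k k H).toAlgHom.comp
    (Algebra.TensorProduct.map (AlgHom.id k H) Q.counit)

@[simp]
lemma counitLeft_tmul (g h : H) : Q.counitLeft (g ⊗ₜ h) = Q.counit g • h := by
  simp [counitLeft]

@[simp]
lemma counitRight_tmul (g h : H) : Q.counitRight (g ⊗ₜ h) = Q.counit h • g := by
  simp [counitRight]

lemma counitLeft_comp_comul : Q.counitLeft.comp Q.comul = AlgHom.id k H := by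
  ext h
  simp [counitLeft, Q.counit_comul_left]

lemma counitRight_comp_comul : Q.counitRight.comp Q.comul = AlgHom.id k H := by
  ext h
  simp [counitRight, Q.counit_comul_right]

lemma map_id_counitLeft_Phi :
    Algebra.TensorProduct.map (AlgHom.id k H) Q.counitLeft Q.Phi = 1 := by
  rw [counitLeft, Algebra.TensorProduct.map_id_comp, AlgHom.comp_apply, Q.counit_Phi, map_one]

/-- The counit applied to the third of four factors. -/
noncomputable def counitThird : H ⊗[k] (H ⊗[k] (H ⊗[k] H)) →ₐ[k] H ⊗[k] (H ⊗[k] H) :=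
  Algebra.TensorProduct.map (AlgHom.id k H)
    (Algebra.TensorProduct.map (AlgHom.id k H) Q.counitLeft)

lemma counitThird_one_tmul_Phi : Q.counitThird (1 ⊗ₜ Q.Phi) = 1 := by
  rw [counitThird, Algebra.TensorProduct.map_tmul, map_one]
  exact congrArg (1 ⊗ₜ ·) Q.map_id_counitLeft_Phi

lemma map_id_counitLeft_comp_assoc :
    (Algebra.TensorProduct.map (AlgHom.id k H) Q.counitLeft).comp
        (Algebra.TensorProduct.assoc k k k H H H).toAlgHom
      = Algebra.TensorProduct.map Q.counitRight (AlgHom.id k H) := by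
  ext <;> simp [Algebra.TensorProduct.one_def]

lemma counitThird_map_id_comul_id (y : H ⊗[k] (H ⊗[k] H)) :
    Q.counitThird (Algebra.TensorProduct.map (AlgHom.id k H)
      ((Algebra.TensorProduct.assoc k k k H H H).toAlgHom.comp
        (Algebra.TensorProduct.map Q.comul (AlgHom.id k H))) y) = y := by
  rw [counitThird, ← AlgHom.comp_apply, ← Algebra.TensorProduct.map_id_comp, ← AlgHom.comp_assoc,
    map_id_counitLeft_comp_assoc, ← Algebra.TensorProduct.map_comp_id, counitRight_comp_comul,
    Algebra.TensorProduct.map_id, Algebra.TensorProduct.map_id, AlgHom.id_apply]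

lemma counitThird_map_id_id_comul (y : H ⊗[k] (H ⊗[k] H)) :
    Q.counitThird (Algebra.TensorProduct.map (AlgHom.id k H)
      (Algebra.TensorProduct.map (AlgHom.id k H) Q.comul) y) = y := by
  rw [counitThird, ← AlgHom.comp_apply, ← Algebra.TensorProduct.map_id_comp,
    ← Algebra.TensorProduct.map_id_comp, counitLeft_comp_comul, Algebra.TensorProduct.map_id,
    Algebra.TensorProduct.map_id, AlgHom.id_apply]

lemma counitThird_assoc (y : (H ⊗[k] H) ⊗[k] (H ⊗[k] H)) :
    Q.counitThird (Algebra.TensorProduct.assoc k k k H H (H ⊗[k] H) y)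
      = Algebra.TensorProduct.assoc k k k H H H
          (Algebra.TensorProduct.map (AlgHom.id k (H ⊗[k] H)) Q.counitLeft y) := by
  suffices Q.counitThird.comp (Algebra.TensorProduct.assoc k k k H H (H ⊗[k] H)).toAlgHom
      = (Algebra.TensorProduct.assoc k k k H H H).toAlgHom.comp
          (Algebra.TensorProduct.map (AlgHom.id k (H ⊗[k] H)) Q.counitLeft) from
    AlgHom.congr_fun this y
  ext <;> simp [counitThird, Algebra.TensorProduct.one_def]

lemma counitThird_comul_id_id_Phi :
    Q.counitThird (Algebra.TensorProduct.assoc k k k H H (H ⊗[k] H)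
      (Algebra.TensorProduct.map Q.comul (AlgHom.id k (H ⊗[k] H)) Q.Phi)) = 1 := by
  have interchange :
      Algebra.TensorProduct.map (AlgHom.id k (H ⊗[k] H)) Q.counitLeft
          (Algebra.TensorProduct.map Q.comul (AlgHom.id k (H ⊗[k] H)) Q.Phi)
        = Algebra.TensorProduct.map Q.comul (AlgHom.id k H)
            (Algebra.TensorProduct.map (AlgHom.id k H) Q.counitLeft Q.Phi) := by
    simp only [← AlgHom.comp_apply, ← Algebra.TensorProduct.map_comp, AlgHom.id_comp,
      AlgHom.comp_id]
  rw [counitThird_assoc, interchange, map_id_counitLeft_Phi, map_one, map_one]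

lemma counitThird_map_includeLeft_Phi :
    Q.counitThird (Algebra.TensorProduct.map (AlgHom.id k H)
      (Algebra.TensorProduct.map (AlgHom.id k H)
        (Algebra.TensorProduct.includeLeft : H →ₐ[k] H ⊗[k] H)) Q.Phi) = 1 := by
  have h := congrArg Q.counitThird Q.pentagon
  rw [map_mul, map_mul, map_mul, counitThird_one_tmul_Phi, counitThird_map_id_comul_id,
    counitThird_map_id_id_comul, counitThird_comul_id_id_Phi, one_mul, mul_one] at h
  have isUnit_Phi : IsUnit Q.Phi := ⟨⟨Q.Phi, Q.PhiInv, Q.Phi_mul_inv, Q.inv_mul_Phi⟩, rfl⟩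
  exact isUnit_Phi.mul_eq_left.mp h

lemma map_id_counitRight_Phi :
    Algebra.TensorProduct.map (AlgHom.id k H) Q.counitRight Q.Phi = 1 := by
  have counitRight_counitLeft : (Q.counitRight.comp
      (Algebra.TensorProduct.map (AlgHom.id k H) Q.counitLeft)).comp
        (Algebra.TensorProduct.map (AlgHom.id k H) Algebra.TensorProduct.includeLeft)
      = Q.counitRight := by
    ext <;> simp
  have h := congrArg (Algebra.TensorProduct.map (AlgHom.id k H) Q.counitRight)
    Q.counitThird_map_includeLeft_Phi
  rwa [map_one, counitThird, ← AlgHom.comp_apply, ← AlgHom.comp_apply,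
    ← Algebra.TensorProduct.map_id_comp, ← Algebra.TensorProduct.map_id_comp,
    counitRight_counitLeft] at h

lemma map_id_counitRight_PhiInv :
    Algebra.TensorProduct.map (AlgHom.id k H) Q.counitRight Q.PhiInv = 1 := by
  have h := congrArg (Algebra.TensorProduct.map (AlgHom.id k H) Q.counitRight) Q.Phi_mul_inv
  rwa [map_mul, map_id_counitRight_Phi, one_mul, map_one] at h

end Counit

section SmashProduct

variable {k H A : Type*} [Field k] [Ring H] [Algebra k H] [AddCommGroup A] [Module k A]
  (Q : QuasiBialgebra k H) (ρ : H →ₐ[k] Module.End k A) (mulA : A →ₗ[k] A →ₗ[k] A)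

/-- The multiplication `(a ⊗ h)(a' ⊗ h') = (x¹·a)(x²h₁·a') ⊗ x³h₂h'` of the quasi-smash product
`A ⊗ H`, encoded as `(a ⊗ h) w = (mulA ⊗ id) (Φ⁻¹ · (a ⊗ Δ(h) · w))`, where `H` acts on `A` by `ρ`
and on itself by left multiplication. -/
noncomputable def smashMul : A ⊗[k] H →ₗ[k] A ⊗[k] H →ₗ[k] A ⊗[k] H :=
  TensorProduct.lift <| LinearMap.mk₂ k
    (fun a h => mulFirst mulA H ∘ₗ outerTensor ρ (outerTensor ρ (Algebra.lmul k H)) Q.PhiInv ∘ₗ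
      TensorProduct.mk k A (A ⊗[k] H) a ∘ₗ outerTensor ρ (Algebra.lmul k H) (Q.comul h))
    (fun a a' h => by ext; simp)
    (fun r a h => by ext; simp)
    (fun a h h' => by ext; simp [TensorProduct.tmul_add])
    (fun r a h => by ext; simp)

lemma smashMul_tmul (a : A) (h : H) (w : A ⊗[k] H) :
    Q.smashMul ρ mulA (a ⊗ₜ h) w
      = mulFirst mulA H (outerTensor ρ (outerTensor ρ (Algebra.lmul k H)) Q.PhiInv
          (a ⊗ₜ outerTensor ρ (Algebra.lmul k H) (Q.comul h) w)) :=
  rfl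

lemma smashMul_tmul_tmul {n m : ℕ} {x1 x2 x3 : Fin n → H} {d1 d2 : Fin m → H} {h : H}
    (hx : Q.PhiInv = ∑ i, x1 i ⊗ₜ[k] (x2 i ⊗ₜ[k] x3 i)) (hd : Q.comul h = ∑ j, d1 j ⊗ₜ[k] d2 j)
    (a a' : A) (h' : H) :
    Q.smashMul ρ mulA (a ⊗ₜ h) (a' ⊗ₜ h')
      = ∑ i, ∑ j, mulA (ρ (x1 i) a) (ρ (x2 i * d1 j) a') ⊗ₜ[k] (x3 i * d2 j * h') := by
  rw [Finset.sum_comm]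
  simp [smashMul_tmul, hx, hd, TensorProduct.tmul_sum, mul_assoc]

lemma eq_smashMul {mulB : A ⊗[k] H →ₗ[k] A ⊗[k] H →ₗ[k] A ⊗[k] H}
    (hmulB : ∀ (a a' : A) (h h' : H) (n : ℕ) (x1 x2 x3 : Fin n → H),
      Q.PhiInv = ∑ i, x1 i ⊗ₜ[k] (x2 i ⊗ₜ[k] x3 i) →
      ∀ (m : ℕ) (d1 d2 : Fin m → H), Q.comul h = ∑ j, d1 j ⊗ₜ[k] d2 j →
      mulB (a ⊗ₜ[k] h) (a' ⊗ₜ[k] h')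
        = ∑ i, ∑ j, mulA (ρ (x1 i) a) (ρ (x2 i * d1 j) a') ⊗ₜ[k] (x3 i * d2 j * h')) :
    mulB = Q.smashMul ρ mulA := by
  ext a h a' h'
  obtain ⟨n, x1, x2, x3, hx⟩ := exists_sum_tmul_tmul_eq Q.PhiInv
  obtain ⟨m, d1, d2, hd⟩ := (Q.comul h).exists_sum_tmul_eq
  exact (hmulB a a' h h' n x1 x2 x3 hx m d1 d2 hd).trans
    (Q.smashMul_tmul_tmul ρ mulA hx hd a a' h').symm

/-- The map `id ⊗ ε : A ⊗ H → A`. -/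
noncomputable def tensorCounit (A : Type*) [AddCommGroup A] [Module k A] : A ⊗[k] H →ₗ[k] A :=
  (TensorProduct.rid k A).toLinearMap ∘ₗ Q.counit.toLinearMap.lTensor A

@[simp]
lemma tensorCounit_tmul (a : A) (h : H) : Q.tensorCounit A (a ⊗ₜ h) = Q.counit h • a := by
  simp [tensorCounit]

lemma tensorCounit_outerTensor_lmul (z : H ⊗[k] H) (w : A ⊗[k] H) :
    Q.tensorCounit A (outerTensor ρ (Algebra.lmul k H) z w)
      = ρ (Q.counitRight z) (Q.tensorCounit A w) := by
  induction z with
  | zero => simp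
  | add y z hy hz => simp only [map_add, LinearMap.add_apply, hy, hz]
  | tmul g g' =>
    induction w with
    | zero => simp
    | add v w hv hw => simp only [map_add, hv, hw]
    | tmul a h => simp [smul_smul, mul_comm]

lemma tensorCounit_mulFirst (v : A ⊗[k] (A ⊗[k] H)) :
    Q.tensorCounit A (mulFirst mulA H v)
      = TensorProduct.lift mulA ((Q.tensorCounit A).lTensor A v) := by
  suffices Q.tensorCounit A ∘ₗ mulFirst mulA H
      = TensorProduct.lift mulA ∘ₗ (Q.tensorCounit A).lTensor A from LinearMap.congr_fun this v
  ext
  simp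

lemma tensorCounit_smashMul_tmul (a : A) (h : H) (w : A ⊗[k] H) :
    Q.tensorCounit A (Q.smashMul ρ mulA (a ⊗ₜ h) w) = mulA a (ρ h (Q.tensorCounit A w)) := by
  rw [smashMul_tmul, tensorCounit_mulFirst,
    lTensor_outerTensor ρ (Q.tensorCounit_outerTensor_lmul ρ), map_id_counitRight_PhiInv, map_one,
    Module.End.one_apply, LinearMap.lTensor_tmul, tensorCounit_outerTensor_lmul,
    ← AlgHom.comp_apply Q.counitRight, counitRight_comp_comul, AlgHom.id_apply,
    TensorProduct.lift.tmul]

lemma tensorCounit_smashMul_tmul_one (u : A ⊗[k] H) (c : A) :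
    Q.tensorCounit A (Q.smashMul ρ mulA u (c ⊗ₜ 1))
      = TensorProduct.lift mulA ((ρ.toLinearMap.flip c).lTensor A u) := by
  induction u with
  | zero => simp
  | add u v hu hv => simp only [map_add, LinearMap.add_apply, hu, hv]
  | tmul a h => simp [tensorCounit_smashMul_tmul]

lemma tensorCounit_smashMul_smashMul_left (a b c : A) :
    Q.tensorCounit A (Q.smashMul ρ mulA (Q.smashMul ρ mulA (a ⊗ₜ 1) (b ⊗ₜ 1)) (c ⊗ₜ 1))
      = TensorProduct.lift mulA
          (mulFirst mulA A (outerTensor ρ (outerTensor ρ ρ) Q.PhiInv (a ⊗ₜ (b ⊗ₜ c)))) := by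
  have lTensor_flip_outerTensor_lmul (z : H ⊗[k] H) (v : A ⊗[k] H) :
      (ρ.toLinearMap.flip c).lTensor A (outerTensor ρ (Algebra.lmul k H) z v)
        = outerTensor ρ ρ (AlgHom.id k _ z) ((ρ.toLinearMap.flip c).lTensor A v) := by
    rw [lTensor_outerTensor (ψ := AlgHom.id k H) (σ' := ρ) ρ (fun g h => by simp),
      Algebra.TensorProduct.map_id]
  rw [tensorCounit_smashMul_tmul_one, smashMul_tmul, lTensor_mulFirst,
    lTensor_outerTensor ρ lTensor_flip_outerTensor_lmul, Algebra.TensorProduct.map_id]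
  simp

lemma tensorCounit_smashMul_smashMul_right (a b c : A) :
    Q.tensorCounit A (Q.smashMul ρ mulA (a ⊗ₜ 1) (Q.smashMul ρ mulA (b ⊗ₜ 1) (c ⊗ₜ 1)))
      = mulA a (mulA b c) := by
  simp [tensorCounit_smashMul_tmul]

lemma lift_mulFirst_PhiInv_of_smashMul_assoc
    (hassoc : ∀ a b c : A,
      Q.smashMul ρ mulA (Q.smashMul ρ mulA (a ⊗ₜ 1) (b ⊗ₜ 1)) (c ⊗ₜ 1)
        = Q.smashMul ρ mulA (a ⊗ₜ 1) (Q.smashMul ρ mulA (b ⊗ₜ 1) (c ⊗ₜ 1)))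
    (t : A ⊗[k] (A ⊗[k] A)) :
    TensorProduct.lift mulA (mulFirst mulA A (outerTensor ρ (outerTensor ρ ρ) Q.PhiInv t))
      = TensorProduct.lift mulA ((TensorProduct.lift mulA).lTensor A t) := by
  suffices TensorProduct.lift mulA ∘ₗ mulFirst mulA A ∘ₗ outerTensor ρ (outerTensor ρ ρ) Q.PhiInv
      = TensorProduct.lift mulA ∘ₗ (TensorProduct.lift mulA).lTensor A from
    LinearMap.congr_fun this t
  ext a b c
  have h := congrArg (Q.tensorCounit A) (hassoc a b c)
  rwa [tensorCounit_smashMul_smashMul_left, tensorCounit_smashMul_smashMul_right] at h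

lemma mul_mul_eq_of_lift_mulFirst_PhiInv
    (h : ∀ t : A ⊗[k] (A ⊗[k] A),
      TensorProduct.lift mulA (mulFirst mulA A (outerTensor ρ (outerTensor ρ ρ) Q.PhiInv t))
        = TensorProduct.lift mulA ((TensorProduct.lift mulA).lTensor A t))
    (a b c : A) :
    mulA (mulA a b) c
      = TensorProduct.lift mulA
          ((TensorProduct.lift mulA).lTensor A
            (outerTensor ρ (outerTensor ρ ρ) Q.Phi (a ⊗ₜ (b ⊗ₜ c)))) := by
  rw [← h, ← Module.End.mul_apply, ← map_mul, Q.inv_mul_Phi, map_one, Module.End.one_apply,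
    mulFirst_tmul, TensorProduct.lift.tmul]

end SmashProduct

end QuasiBialgebra

theorem statement0_general {k H A : Type*} [Field k] [Ring H] [Algebra k H]
    [AddCommGroup A] [Module k A] (Q : QuasiBialgebra k H) (ρ : H →ₐ[k] Module.End k A)
    (mulA : A →ₗ[k] A →ₗ[k] A)
    (mulB : (A ⊗[k] H) →ₗ[k] (A ⊗[k] H) →ₗ[k] (A ⊗[k] H))
    (hmulB : ∀ (a a' : A) (h h' : H) (n : ℕ) (x1 x2 x3 : Fin n → H),
      Q.PhiInv = ∑ i, x1 i ⊗ₜ[k] (x2 i ⊗ₜ[k] x3 i) →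
      ∀ (m : ℕ) (d1 d2 : Fin m → H), Q.comul h = ∑ j, d1 j ⊗ₜ[k] d2 j →
      mulB (a ⊗ₜ[k] h) (a' ⊗ₜ[k] h')
        = ∑ i, ∑ j, mulA (ρ (x1 i) a) (ρ (x2 i * d1 j) a') ⊗ₜ[k] (x3 i * d2 j * h'))
    (hassoc : ∀ a b c : A, mulB (mulB (a ⊗ₜ 1) (b ⊗ₜ 1)) (c ⊗ₜ 1)
      = mulB (a ⊗ₜ 1) (mulB (b ⊗ₜ 1) (c ⊗ₜ 1)))
    (a b c : A) (n : ℕ) (X1 X2 X3 : Fin n → H)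
    (hX : Q.Phi = ∑ i, X1 i ⊗ₜ[k] (X2 i ⊗ₜ[k] X3 i)) :
    mulA (mulA a b) c = ∑ i, mulA (ρ (X1 i) a) (mulA (ρ (X2 i) b) (ρ (X3 i) c)) := by
  obtain rfl : mulB = Q.smashMul ρ mulA := Q.eq_smashMul ρ mulA hmulB
  have h := Q.mul_mul_eq_of_lift_mulFirst_PhiInv ρ mulA
    (Q.lift_mulFirst_PhiInv_of_smashMul_assoc ρ mulA hassoc) a b c
  simpa [hX] using h

/-- If the smash-product-type multiplication on `A ⊗ H` is associative, then the
multiplication of `A` satisfies `(ab)c = (X¹·a)((X²·b)(X³·c))`. -/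
theorem statement0 {k H A : Type*} [Field k] [Ring H] [Algebra k H]
    [AddCommGroup A] [Module k A] (Q : QuasiBialgebra k H)
    (act : H →ₗ[k] A →ₗ[k] A)
    (act_one : ∀ a : A, act 1 a = a)
    (act_mul : ∀ (g h : H) (a : A), act (g * h) a = act g (act h a))
    (mulA : A →ₗ[k] A →ₗ[k] A)
    (mulB : (A ⊗[k] H) →ₗ[k] (A ⊗[k] H) →ₗ[k] (A ⊗[k] H))
    (hmulB : ∀ (a a' : A) (h h' : H) (n : ℕ) (x1 x2 x3 : Fin n → H),
      Q.PhiInv = ∑ i, x1 i ⊗ₜ[k] (x2 i ⊗ₜ[k] x3 i) →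
      ∀ (m : ℕ) (d1 d2 : Fin m → H), Q.comul h = ∑ j, d1 j ⊗ₜ[k] d2 j →
      mulB (a ⊗ₜ[k] h) (a' ⊗ₜ[k] h')
        = ∑ i, ∑ j, (mulA (act (x1 i) a) (act (x2 i * d1 j) a')) ⊗ₜ[k] (x3 i * d2 j * h'))
    (hassoc : ∀ u w z : A ⊗[k] H, mulB (mulB u w) z = mulB u (mulB w z)) :
    ∀ (a b c : A) (n : ℕ) (X1 X2 X3 : Fin n → H),
      Q.Phi = ∑ i, X1 i ⊗ₜ[k] (X2 i ⊗ₜ[k] X3 i) →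
      mulA (mulA a b) c
        = ∑ i, mulA (act (X1 i) a) (mulA (act (X2 i) b) (act (X3 i) c)) := by
  exact statement0_general Q
    (AlgHom.ofLinearMap act (LinearMap.ext act_one) fun g h => LinearMap.ext (act_mul g h))
    mulA mulB hmulB fun _ _ _ => hassoc _ _ _
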